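/- One has 4 ∫_{v=-2}^{-2/3} ( (2 + 4v + 3v²)/(1 + 2v)² ) · √( −(1 + 2v + 3v²) / ((2+v)(2+3v)) ) dv = (4/3) · ( 9 E(1/9) − 8 K(1/9) + 8 Π(−1/3, 1/9) ), where E(μ) = ∫₀^{π/2} √(1 − μ sin²θ) dθ, K(μ) = ∫₀^{π/2} dθ/√(1 − μ sin²θ), and Π(ν, μ) = ∫₀^{π/2} dθ / ( (1 − ν sin²θ) √(1 − μ sin²θ) ) are the complete elliptic integrals of the second, first, and third kinds. -/

import Mathlib

open Real

/-- Complete elliptic integral of the second kind. -/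
noncomputable def ellipticE (μ : ℝ) : ℝ :=
  ∫ θ in (0 : ℝ)..(Real.pi / 2), Real.sqrt (1 - μ * Real.sin θ ^ 2)

/-- Complete elliptic integral of the first kind. -/
noncomputable def ellipticK (μ : ℝ) : ℝ :=
  ∫ θ in (0 : ℝ)..(Real.pi / 2), 1 / Real.sqrt (1 - μ * Real.sin θ ^ 2)

/-- Complete elliptic integral of the third kind. -/
noncomputable def ellipticPi (ν μ : ℝ) : ℝ :=
  ∫ θ in (0 : ℝ)..(Real.pi / 2),
    1 / ((1 - ν * Real.sin θ ^ 2) * Real.sqrt (1 - μ * Real.sin θ ^ 2))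

/-!
Under `v = -2 / (2 - cos θ)`, `0 < θ < π`, the factors `2 + v` and `2 + 3 * v` become multiples of
`1 - cos θ` and `1 + cos θ`, whose product `sin² θ` cancels against the Jacobian; what remains is a
function of `sin² θ` with a double pole at `sin² θ = -3`. Legendre's reduction removes such a double
pole: modulo the derivative of `sin θ cos θ √(1 - μ sin² θ) / (1 - ν sin² θ)`, the integrand is a
combination of those of the three complete elliptic integrals.
-/

/-- The integrand of the surface area integral, as a function of the parameter `v`. -/
noncomputable def areaIntegrand (v : ℝ) : ℝ :=
  (2 + 4 * v + 3 * v ^ 2) / (1 + 2 * v) ^ 2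
    * √(-(1 + 2 * v + 3 * v ^ 2) / ((2 + v) * (2 + 3 * v)))

/-- The elliptic integrand with a double pole at `sin² θ = 1 / ν` which reduces to complete elliptic
integrals of the three kinds with the same parameters `ν` and `μ`. -/
noncomputable def doublePoleIntegrand (ν μ θ : ℝ) : ℝ :=
  (1 + ν * sin θ ^ 2) / (1 - ν * sin θ ^ 2) ^ 2 * √(1 - μ * sin θ ^ 2)

section LegendreReduction

variable {ν μ : ℝ}

theorem one_sub_mul_sin_sq_pos (hμ : μ < 1) (θ : ℝ) : 0 < 1 - μ * sin θ ^ 2 := by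
  rcases le_total μ 0 with h | h
  · nlinarith [sq_nonneg (sin θ)]
  · nlinarith [sin_sq_le_one θ]

theorem sqrt_one_sub_mul_sin_sq_pos (hμ : μ < 1) (θ : ℝ) : 0 < √(1 - μ * sin θ ^ 2) :=
  sqrt_pos.2 (one_sub_mul_sin_sq_pos hμ θ)

theorem hasDerivAt_one_sub_mul_sin_sq (μ θ : ℝ) :
    HasDerivAt (fun θ => 1 - μ * sin θ ^ 2) (-(2 * μ * sin θ * cos θ)) θ :=
  ((((hasDerivAt_sin θ).fun_pow 2).const_mul μ).const_sub 1).congr_deriv (by ring)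

theorem hasDerivAt_sqrt_one_sub_mul_sin_sq (hμ : μ < 1) (θ : ℝ) :
    HasDerivAt (fun θ => √(1 - μ * sin θ ^ 2))
      (-(μ * sin θ * cos θ) / √(1 - μ * sin θ ^ 2)) θ :=
  ((hasDerivAt_one_sub_mul_sin_sq μ θ).sqrt (one_sub_mul_sin_sq_pos hμ θ).ne').congr_deriv
    (by ring)

theorem hasDerivAt_legendre_reduction (hν : ν < 1) (hμ : μ < 1) (θ : ℝ) :
    HasDerivAt (fun θ => ν * (sin θ * cos θ * √(1 - μ * sin θ ^ 2) / (1 - ν * sin θ ^ 2)))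
      (√(1 - μ * sin θ ^ 2) - (1 - μ) * (1 / √(1 - μ * sin θ ^ 2))
        + (1 - μ) * (1 / ((1 - ν * sin θ ^ 2) * √(1 - μ * sin θ ^ 2)))
        - (1 - ν) * doublePoleIntegrand ν μ θ) θ := by
  have hN := one_sub_mul_sin_sq_pos hν θ
  have hΔ := sqrt_one_sub_mul_sin_sq_pos hμ θ
  have hΔ_sq : √(1 - μ * sin θ ^ 2) ^ 2 = 1 - μ * sin θ ^ 2 :=
    sq_sqrt (one_sub_mul_sin_sq_pos hμ θ).le
  have hderiv := (((((hasDerivAt_sin θ).fun_mul (hasDerivAt_cos θ)).fun_mul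
    (hasDerivAt_sqrt_one_sub_mul_sin_sq hμ θ)).fun_div
    (hasDerivAt_one_sub_mul_sin_sq ν θ) hN.ne').const_mul ν)
  refine hderiv.congr_deriv ?_
  unfold doublePoleIntegrand
  generalize √(1 - μ * sin θ ^ 2) = Δ at *
  field_simp
  simp only [hΔ_sq, cos_sq']
  ring

theorem continuous_sqrt_one_sub_mul_sin_sq (μ : ℝ) :
    Continuous fun θ => √(1 - μ * sin θ ^ 2) := by
  fun_prop

theorem continuous_ellipticK_integrand (hμ : μ < 1) :
    Continuous fun θ => 1 / √(1 - μ * sin θ ^ 2) :=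
  continuous_const.div (continuous_sqrt_one_sub_mul_sin_sq μ)
    fun θ => (sqrt_one_sub_mul_sin_sq_pos hμ θ).ne'

theorem continuous_ellipticPi_integrand (hν : ν < 1) (hμ : μ < 1) :
    Continuous fun θ => 1 / ((1 - ν * sin θ ^ 2) * √(1 - μ * sin θ ^ 2)) :=
  continuous_const.div (by fun_prop) fun θ =>
    (mul_pos (one_sub_mul_sin_sq_pos hν θ) (sqrt_one_sub_mul_sin_sq_pos hμ θ)).ne'

theorem continuous_doublePoleIntegrand (hν : ν < 1) (μ : ℝ) :
    Continuous (doublePoleIntegrand ν μ) :=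
  (Continuous.div (by fun_prop) (by fun_prop) fun θ =>
    pow_ne_zero 2 (one_sub_mul_sin_sq_pos hν θ).ne').mul (continuous_sqrt_one_sub_mul_sin_sq μ)

theorem one_sub_mul_integral_doublePoleIntegrand (hν : ν < 1) (hμ : μ < 1) :
    (1 - ν) * ∫ θ in (0)..(π / 2), doublePoleIntegrand ν μ θ =
      ellipticE μ - (1 - μ) * ellipticK μ + (1 - μ) * ellipticPi ν μ := by
  have hE := (continuous_sqrt_one_sub_mul_sin_sq μ).intervalIntegrable
    (μ := MeasureTheory.volume) 0 (π / 2)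
  have hK := ((continuous_ellipticK_integrand hμ).const_mul (1 - μ)).intervalIntegrable
    (μ := MeasureTheory.volume) 0 (π / 2)
  have hPi := ((continuous_ellipticPi_integrand hν hμ).const_mul (1 - μ)).intervalIntegrable
    (μ := MeasureTheory.volume) 0 (π / 2)
  have hD := ((continuous_doublePoleIntegrand hν μ).const_mul (1 - ν)).intervalIntegrable
    (μ := MeasureTheory.volume) 0 (π / 2)
  have hFTC := intervalIntegral.integral_eq_sub_of_hasDerivAt
    (fun θ _ => hasDerivAt_legendre_reduction hν hμ θ) (((hE.sub hK).add hPi).sub hD)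
  rw [intervalIntegral.integral_sub ((hE.sub hK).add hPi) hD,
    intervalIntegral.integral_add (hE.sub hK) hPi, intervalIntegral.integral_sub hE hK] at hFTC
  simp only [intervalIntegral.integral_const_mul, cos_pi_div_two, sin_zero, mul_zero, zero_mul,
    zero_div, sub_zero] at hFTC
  exact (sub_eq_zero.1 hFTC).symm

end LegendreReduction

section ChangeOfVariables

theorem integral_eq_two_smul_integral_half {E : Type*} [NormedAddCommGroup E] [NormedSpace ℝ E]
    {f : ℝ → E} {a : ℝ} (hsymm : ∀ x, f (a - x) = f x)
    (hf : IntervalIntegrable f MeasureTheory.volume 0 (a / 2)) :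
    ∫ x in (0)..a, f x = (2 : ℝ) • ∫ x in (0)..(a / 2), f x := by
  have hhalf : a - a / 2 = a / 2 := by ring
  have hf' : IntervalIntegrable f MeasureTheory.volume (a / 2) a := by
    simpa only [hsymm, sub_zero, hhalf] using (hf.comp_sub_left a).symm
  have hreflect : ∫ x in (a / 2)..a, f x = ∫ x in (0)..(a / 2), f x := by
    simpa only [hsymm, sub_zero, hhalf] using
      (intervalIntegral.integral_comp_sub_left (a := 0) (b := a / 2) f a).symm
  rw [← intervalIntegral.integral_add_adjacent_intervals hf hf', hreflect, two_smul]

theorem hasDerivAt_div_sub_cos (a : ℝ) {k : ℝ} (hk : 1 < k) (θ : ℝ) :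
    HasDerivAt (fun θ => a / (k - cos θ)) (-a * sin θ / (k - cos θ) ^ 2) θ := by
  have hne : k - cos θ ≠ 0 := by linarith [cos_le_one θ]
  refine ((hasDerivAt_const θ a).fun_div ((hasDerivAt_cos θ).const_sub k) hne).congr_deriv ?_
  ring

theorem integral_comp_div_sub_cos_mul_deriv (g : ℝ → ℝ) {a k : ℝ} (ha : a ≤ 0) (hk : 1 < k) :
    ∫ θ in (0)..π, g (a / (k - cos θ)) * (-a * sin θ / (k - cos θ) ^ 2) =
      ∫ v in (a / (k - 1))..(a / (k + 1)), g v := by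
  have hderiv := hasDerivAt_div_sub_cos a hk
  have hsub := intervalIntegral.integral_comp_mul_deriv_of_deriv_nonneg (a := 0) (b := π) (g := g)
    (fun θ _ => (hderiv θ).continuousAt.continuousWithinAt) (fun θ _ => hderiv θ) fun θ hθ => by
      rw [min_eq_left pi_pos.le, max_eq_right pi_pos.le] at hθ
      have hsin := sin_pos_of_mem_Ioo hθ
      have ha' := neg_nonneg.2 ha
      positivity
  simpa only [Function.comp_apply, cos_zero, cos_pi, sub_neg_eq_add] using hsub

end ChangeOfVariables

section Pullback

variable {c : ℝ}

theorem areaIntegrand_radicand_eq (h₂ : 2 - c ≠ 0) (h₁ : 1 - c ≠ 0) (h₁' : 1 + c ≠ 0) :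
    -(1 + 2 * (-2 / (2 - c)) + 3 * (-2 / (2 - c)) ^ 2)
        / ((2 + -2 / (2 - c)) * (2 + 3 * (-2 / (2 - c)))) =
      (8 + c ^ 2) / (4 * ((1 - c) * (1 + c))) := by
  have hleft : 2 + -2 / (2 - c) = 2 * (1 - c) / (2 - c) := by
    field_simp
    ring
  have hright : 2 + 3 * (-2 / (2 - c)) = -2 * (1 + c) / (2 - c) := by
    field_simp
    ring
  rw [hleft, hright]
  field_simp
  ring

theorem areaIntegrand_rational_factor_eq (h₂ : 2 - c ≠ 0) (h₂' : 2 + c ≠ 0) :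
    (2 + 4 * (-2 / (2 - c)) + 3 * (-2 / (2 - c)) ^ 2) / (1 + 2 * (-2 / (2 - c))) ^ 2 =
      2 * (2 + c ^ 2) / (2 + c) ^ 2 := by
  have hden : 1 + 2 * (-2 / (2 - c)) = -(2 + c) / (2 - c) := by
    field_simp
    ring
  rw [hden]
  field_simp
  ring

theorem areaIntegrand_comp_mul_deriv {θ : ℝ} (hθ : 0 < sin θ) :
    areaIntegrand (-2 / (2 - cos θ)) * (2 * sin θ / (2 - cos θ) ^ 2) =
      2 * doublePoleIntegrand (-1 / 3) (1 / 9) θ := by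
  have hsin_sq : (1 - cos θ) * (1 + cos θ) = sin θ ^ 2 := by linear_combination -sin_sq θ
  have hprod : (1 - cos θ) * (1 + cos θ) ≠ 0 := by
    rw [hsin_sq]
    positivity
  have h₂ : 2 - cos θ ≠ 0 := by linarith [cos_le_one θ]
  have h₂' : 2 + cos θ ≠ 0 := by linarith [neg_one_le_cos θ]
  have hsqrt : √((8 + cos θ ^ 2) / (4 * sin θ ^ 2)) =
      3 / (2 * sin θ) * √(1 - 1 / 9 * sin θ ^ 2) := by
    have hrad : (8 + cos θ ^ 2) / (4 * sin θ ^ 2) =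
        (3 / (2 * sin θ)) ^ 2 * (1 - 1 / 9 * sin θ ^ 2) := by
      rw [cos_sq']
      field_simp
      ring
    rw [hrad, sqrt_mul (sq_nonneg _), sqrt_sq (by positivity)]
  have hpole : 1 - -1 / 3 * sin θ ^ 2 = (2 - cos θ) * (2 + cos θ) / 3 := by
    rw [sin_sq]
    ring
  have hnum : 1 + -1 / 3 * sin θ ^ 2 = (2 + cos θ ^ 2) / 3 := by
    rw [sin_sq]
    ring
  unfold areaIntegrand doublePoleIntegrand
  rw [areaIntegrand_radicand_eq h₂ (left_ne_zero_of_mul hprod) (right_ne_zero_of_mul hprod),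
    areaIntegrand_rational_factor_eq h₂ h₂', hsin_sq, hsqrt, hpole, hnum]
  field_simp

end Pullback

theorem integral_areaIntegrand :
    ∫ v in (-2)..(-2 / 3), areaIntegrand v =
      4 * ∫ θ in (0)..(π / 2), doublePoleIntegrand (-1 / 3) (1 / 9) θ := by
  have hcont := continuous_doublePoleIntegrand (ν := -1 / 3) (by norm_num) (1 / 9)
  have hsymm (θ : ℝ) :
      doublePoleIntegrand (-1 / 3) (1 / 9) (π - θ) = doublePoleIntegrand (-1 / 3) (1 / 9) θ := by
    simp only [doublePoleIntegrand, sin_pi_sub]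
  calc
    ∫ v in (-2)..(-2 / 3), areaIntegrand v
      = ∫ θ in (0)..π, areaIntegrand (-2 / (2 - cos θ)) * (-(-2) * sin θ / (2 - cos θ) ^ 2) := by
        rw [integral_comp_div_sub_cos_mul_deriv areaIntegrand (by norm_num) one_lt_two]
        norm_num
    _ = ∫ θ in (0)..π, 2 * doublePoleIntegrand (-1 / 3) (1 / 9) θ := by
        rw [neg_neg]
        exact intervalIntegral.integral_congr_Ioo_of_le pi_pos.le fun θ hθ =>
          areaIntegrand_comp_mul_deriv (sin_pos_of_mem_Ioo hθ)
    _ = 4 * ∫ θ in (0)..(π / 2), doublePoleIntegrand (-1 / 3) (1 / 9) θ := by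
        rw [intervalIntegral.integral_const_mul,
          integral_eq_two_smul_integral_half hsymm (hcont.intervalIntegrable _ _), smul_eq_mul]
        ring

/-- Vogt's closed form for the curved surface area of Example 3. -/
theorem surface_area_example_three :
    4 * (∫ v in (-2 : ℝ)..(-2/3),
        ((2 + 4 * v + 3 * v ^ 2) / (1 + 2 * v) ^ 2)
          * Real.sqrt (-(1 + 2 * v + 3 * v ^ 2) / ((2 + v) * (2 + 3 * v)))) =
      (4 / 3) * (9 * ellipticE (1/9) - 8 * ellipticK (1/9) + 8 * ellipticPi (-1/3) (1/9)) := by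
  change 4 * (∫ v in (-2)..(-2 / 3), areaIntegrand v) = _
  rw [integral_areaIntegrand]
  linear_combination 12 * one_sub_mul_integral_doublePoleIntegrand
    (ν := -1 / 3) (μ := 1 / 9) (by norm_num) (by norm_num)
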